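/- For every I ⊆ {1,…,s} and every finite set Σ of zero-nonzero conditions on I, the adapted family satisfies card(Ada(Σ)) = card(Σ). -/

import Mathlib

open Classical in
/-- Restriction (extension by zero) of a zero-nonzero condition to the index set `I`. -/
noncomputable def zres (I : Finset ℕ) (σ : ℕ → Fin 2) : ℕ → Fin 2 :=
  fun j => if j ∈ I then σ j else 0

open Classical in
/-- The adapted family `Ada(Σ)` of a finite set `Σ` of zero-nonzero conditions on `I`
(encoded as maps `ℕ → Fin 2` vanishing outside `I`), defined by recursion on `card I`:
if `I = ∅` then `Ada(∅) = ∅` and `Ada({σ_∅}) = {∅}`; otherwise, with `i = max I`,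
`I' = I \ {i}`, `Ξ` the set of restrictions of elements of `Σ` to `I'`, and `Ξ'` the set
of elements of `Ξ` having two different extensions in `Σ`,
`Ada(Σ) = Ada(Ξ) ∪ {J ∪ {i} : J ∈ Ada(Ξ')}`. -/
noncomputable def Ada (I : Finset ℕ) (S : Finset (ℕ → Fin 2)) : Finset (Finset ℕ) :=
  if hI : I.Nonempty then
    let i := I.max' hI
    let I' := I.erase i
    let Xi : Finset (ℕ → Fin 2) := S.image (zres I')
    let Xi' : Finset (ℕ → Fin 2) :=
      Xi.filter (fun ξ => 1 < (S.filter (fun σ => zres I' σ = ξ)).card)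
    Ada I' Xi ∪ (Ada I' Xi').image (insert i)
  else if S = ∅ then ∅ else {∅}
termination_by I.card
decreasing_by
  all_goals exact Finset.card_erase_lt_of_mem (I.max'_mem hI)

/-!
With `i = max I`, a condition on `I` is determined by its restriction to `I \ {i}` and its value
at `i`, so every restriction `ξ ∈ Ξ` has one or two extensions in `Σ`, two exactly when `ξ ∈ Ξ'`.
Hence `card Σ = card Ξ + card Ξ'`. The same recursion holds for `card (Ada Σ)`, because the two
parts of the union in its definition are told apart by whether `i` belongs to the set.
-/

open Finset

section RepeatedImage

variable {α β : Type*} [DecidableEq β]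

/-- The values that `f` takes at least twice on `S`. For `f` the restriction of zero-nonzero
conditions to `I \ {max I}` and `S = Σ`, this is the set `Ξ'` of the adapted family. -/
def repeatedImage (f : α → β) (S : Finset α) : Finset β :=
  {b ∈ S.image f | 1 < #{a ∈ S | f a = b}}

theorem repeatedImage_subset_image (f : α → β) (S : Finset α) :
    repeatedImage f S ⊆ S.image f :=
  filter_subset _ _

theorem card_eq_card_image_add_card_repeatedImage {f : α → β} {S : Finset α}
    (hf : ∀ b, #{a ∈ S | f a = b} ≤ 2) :
    #S = #(S.image f) + #(repeatedImage f S) := by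
  rw [card_eq_sum_card_image f S, repeatedImage, card_filter, card_eq_sum_ones,
    ← sum_add_distrib]
  refine sum_congr rfl fun b hb => ?_
  have fiber_pos : 0 < #{a ∈ S | f a = b} := by
    rwa [card_pos, fiber_nonempty_iff_mem_image]
  have fiber_le := hf b
  split_ifs <;> lia

end RepeatedImage

theorem card_union_image_insert {α : Type*} [DecidableEq α] {a : α} {𝒜 ℬ : Finset (Finset α)}
    (h𝒜 : ∀ s ∈ 𝒜, a ∉ s) (hℬ : ∀ s ∈ ℬ, a ∉ s) :
    #(𝒜 ∪ ℬ.image (insert a)) = #𝒜 + #ℬ := by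
  have disjoint_image : Disjoint 𝒜 (ℬ.image (insert a)) := by
    rw [disjoint_right, forall_mem_image]
    exact fun s _ hs => h𝒜 _ hs (mem_insert_self a s)
  rw [card_union_of_disjoint disjoint_image,
    card_image_of_injOn (insert_erase_invOn.2.injOn.mono hℬ)]

theorem zres_eq_zres_iff {I : Finset ℕ} {σ τ : ℕ → Fin 2} :
    zres I σ = zres I τ ↔ ∀ j ∈ I, σ j = τ j := by
  rw [funext_iff]
  exact forall_congr' fun j => by by_cases hj : j ∈ I <;> simp [zres, hj]

theorem eq_zero_of_mem_image_zres [DecidableEq (ℕ → Fin 2)] {I : Finset ℕ}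
    {S : Finset (ℕ → Fin 2)} {ξ : ℕ → Fin 2} (hξ : ξ ∈ S.image (zres I)) {j : ℕ} (hj : j ∉ I) :
    ξ j = 0 := by
  obtain ⟨σ, -, rfl⟩ := mem_image.mp hξ
  exact if_neg hj

theorem card_fiber_zres_le_two [DecidableEq (ℕ → Fin 2)] {i : ℕ} {I : Finset ℕ}
    {S : Finset (ℕ → Fin 2)} (hS : ∀ σ ∈ S, ∀ j ∉ insert i I, σ j = 0) (ξ : ℕ → Fin 2) :
    #{σ ∈ S | zres I σ = ξ} ≤ 2 := by
  have eval_injOn : Set.InjOn (fun σ : ℕ → Fin 2 => σ i) ({σ ∈ S | zres I σ = ξ} : Finset _) := by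
    intro σ hσ τ hτ h_eval
    obtain ⟨hσS, hσξ⟩ := mem_filter.mp hσ
    obtain ⟨hτS, hτξ⟩ := mem_filter.mp hτ
    have eqOn_I := zres_eq_zres_iff.mp (hσξ.trans hτξ.symm)
    funext j
    by_cases hj : j ∈ insert i I
    · rcases mem_insert.mp hj with rfl | hjI
      exacts [h_eval, eqOn_I j hjI]
    · rw [hS σ hσS j hj, hS τ hτS j hj]
  simpa only [card_univ, Fintype.card_fin] using
    card_le_card_of_injOn _ (fun σ _ => mem_univ (σ i)) eval_injOn

theorem Ada_empty_empty : Ada ∅ ∅ = ∅ := by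
  rw [Ada, dif_neg Finset.not_nonempty_empty, if_pos rfl]

theorem Ada_empty_of_nonempty {S : Finset (ℕ → Fin 2)} (hS : S.Nonempty) : Ada ∅ S = {∅} := by
  rw [Ada, dif_neg Finset.not_nonempty_empty, if_neg hS.ne_empty]

open Classical in
theorem Ada_insert {i : ℕ} {I : Finset ℕ} (hi : ∀ j ∈ I, j < i) (S : Finset (ℕ → Fin 2)) :
    Ada (insert i I) S =
      Ada I (S.image (zres I)) ∪ (Ada I (repeatedImage (zres I) S)).image (insert i) := by
  have max_eq : (insert i I).max' (insert_nonempty i I) = i :=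
    (max'_eq_iff _ _ _).mpr
      ⟨mem_insert_self i I, (forall_mem_insert _ _ _).mpr ⟨le_rfl, fun j hj => (hi j hj).le⟩⟩
  have erase_eq : (insert i I).erase i = I := erase_insert fun h => (hi i h).false
  rw [Ada, dif_pos (insert_nonempty i I)]
  simp only [max_eq, erase_eq, repeatedImage]

theorem subset_of_mem_Ada {I J : Finset ℕ} {S : Finset (ℕ → Fin 2)} (hJ : J ∈ Ada I S) :
    J ⊆ I := by
  induction I using Finset.induction_on_max generalizing S J with
  | empty =>
    rcases S.eq_empty_or_nonempty with rfl | hS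
    · exact absurd (Ada_empty_empty ▸ hJ) (notMem_empty J)
    · exact (mem_singleton.mp (Ada_empty_of_nonempty hS ▸ hJ)).subset
  | insert i I hi ih =>
    rw [Ada_insert hi, mem_union, mem_image] at hJ
    rcases hJ with hJ | ⟨K, hK, rfl⟩
    · exact (ih hJ).trans (subset_insert i I)
    · exact insert_subset_insert i (ih hK)

theorem card_Ada_empty {S : Finset (ℕ → Fin 2)} (hS : ∀ σ ∈ S, ∀ j, σ j = 0) :
    #(Ada ∅ S) = #S := by
  have S_subset : S ⊆ {0} := fun σ hσ => mem_singleton.mpr (funext (hS σ hσ))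
  rcases subset_singleton_iff.mp S_subset with rfl | rfl
  · rw [Ada_empty_empty, card_empty, card_empty]
  · rw [Ada_empty_of_nonempty (singleton_nonempty 0), card_singleton, card_singleton]

open Classical in
theorem card_Ada_insert {i : ℕ} {I : Finset ℕ} (hi : ∀ j ∈ I, j < i) (S : Finset (ℕ → Fin 2)) :
    #(Ada (insert i I) S) =
      #(Ada I (S.image (zres I))) + #(Ada I (repeatedImage (zres I) S)) := by
  have notMem_of_mem_Ada (T : Finset (ℕ → Fin 2)) : ∀ J ∈ Ada I T, i ∉ J :=
    fun J hJ hiJ => (hi i (subset_of_mem_Ada hJ hiJ)).false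
  rw [Ada_insert hi, card_union_image_insert (notMem_of_mem_Ada _) (notMem_of_mem_Ada _)]

/-- For every `I ⊆ {1,…,s}` and every finite set `Σ` of zero-nonzero
conditions on `I`, the adapted family satisfies `card(Ada(Σ)) = card(Σ)`. -/
theorem card_Ada_eq_card (s : ℕ) (I : Finset ℕ) (hI : I ⊆ Finset.Icc 1 s)
    (S : Finset (ℕ → Fin 2)) (hsupp : ∀ σ ∈ S, ∀ j ∉ I, σ j = 0) :
    (Ada I S).card = S.card := by
  classical
  induction I using Finset.induction_on_max generalizing S with
  | empty => exact card_Ada_empty fun σ hσ j => hsupp σ hσ j (notMem_empty j)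
  | insert i I hi ih =>
    have ih_of_subset_image {T : Finset (ℕ → Fin 2)} (hT : T ⊆ S.image (zres I)) :
        #(Ada I T) = #T :=
      ih ((subset_insert i I).trans hI) T fun ξ hξ j hj => eq_zero_of_mem_image_zres (hT hξ) hj
    calc #(Ada (insert i I) S)
        = #(Ada I (S.image (zres I))) + #(Ada I (repeatedImage (zres I) S)) := card_Ada_insert hi S
      _ = #(S.image (zres I)) + #(repeatedImage (zres I) S) := by
          rw [ih_of_subset_image Subset.rfl, ih_of_subset_image (repeatedImage_subset_image _ S)]
      _ = #S := (card_eq_card_image_add_card_repeatedImage (card_fiber_zres_le_two hsupp)).symm
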